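/- arXiv:1709.00091 — 5 statements merged into one kernel-verified Lean document; each statement's English description precedes it below -/
import Mathlib

section
/- Let n ≥ 3 be a natural number, κ : Fin n → ℝ with κ i > 0 for every i, and set H = ∑_j κ j. Let S be a finite set of indices in Fin n with card S ≥ 2 such that κ i · H − (κ i)² − (n−1) = 0 for every i ∈ S. Then H² ≥ 4(n−1) and for every i ∈ S one has κ i = (H − √(H² − 4(n−1)))/2; in particular all the κ i with i ∈ S are equal. -/
/-- Algebraic core of Lemma 2.1: if `n ≥ 3`, all principal curvatures `κ i` are positive,
`H = ∑ κ j`, and `S` is a set of at least two indices on which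
`κ i * H - (κ i)^2 - (n-1) = 0` (Ricci-null directions), then `H² ≥ 4(n-1)` and every
`κ i` with `i ∈ S` equals `(H - √(H² - 4(n-1)))/2`; in particular they are all equal. -/
theorem ricci_null_directions_principal (n : ℕ) (hn : 3 ≤ n) (κ : Fin n → ℝ)
    (hκ : ∀ i, 0 < κ i) (H : ℝ) (hH : H = ∑ j, κ j)
    (S : Finset (Fin n)) (hS : 2 ≤ S.card)
    (hRic0 : ∀ i ∈ S, κ i * H - (κ i) ^ 2 - (n - 1 : ℝ) = 0) :
    H ^ 2 ≥ 4 * (n - 1 : ℝ) ∧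
      ∀ i ∈ S, κ i = (H - Real.sqrt (H ^ 2 - 4 * (n - 1 : ℝ))) / 2 := by
  have key : ∀ i ∈ S, 2 * κ i < H := by
    intro i hi
    obtain ⟨j, hj, hji⟩ := Finset.exists_mem_ne (by omega : 1 < S.card) i
    have hlt : κ i + κ j < H := by
      have hc : ({i, j} : Finset (Fin n)).card < (Finset.univ : Finset (Fin n)).card := by
        rw [Finset.card_pair hji.symm, Finset.card_univ, Fintype.card_fin]
        omega
      obtain ⟨k, _, hk⟩ := Finset.exists_mem_notMem_of_card_lt_card hc
      have h := Finset.sum_lt_sum_of_subset (f := κ) (Finset.subset_univ {i, j})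
        (Finset.mem_univ k) hk (hκ k) (fun l _ _ => (hκ l).le)
      rw [Finset.sum_pair hji.symm] at h
      rw [hH]
      exact h
    have h0 : (κ i - κ j) * (H - κ i - κ j) = 0 := by
      linear_combination hRic0 i hi - hRic0 j hj
    rcases mul_eq_zero.mp h0 with h | h <;> linarith
  have hsq : ∀ i ∈ S, H ^ 2 - 4 * (n - 1 : ℝ) = (H - 2 * κ i) ^ 2 := by
    intro i hi
    linear_combination 4 * hRic0 i hi
  constructor
  · obtain ⟨i, hi⟩ := Finset.card_pos.mp (by omega : 0 < S.card)
    have := hsq i hi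
    nlinarith [sq_nonneg (H - 2 * κ i)]
  · intro i hi
    rw [hsq i hi, Real.sqrt_sq (by linarith [key i hi])]
    ring
end

section
/- Let n ≥ 2 be a natural number, f > 0 a real number, v = (f₁,…,f_n) ∈ ℝⁿ a nonzero vector, and (f_{ij}) a symmetric n×n real matrix. With g_{ik} = f^{−2}(δ_{ik}+f_if_k), g^{jl} = f²(δ_{jl} − f_jf_l/(1+|Df|²)), II_{ij} = (δ_{ij}+f_if_j+f f_{ij})/(f²(1+|Df|²)^{1/2}), R_{ik} = −(n−1)g_{ik} + ∑_{j,l} g^{jl}(II_{ik}II_{jl} − II_{il}II_{jk}), and f̄^i = f f_i/(|Df|(1+|Df|²)^{1/2}), one has the identity ∑_{i,k} R_{ik} f̄^i f̄^k = −(n−1)|Df|²/(1+|Df|²) + (f/(|Df|²(1+|Df|²)²))·((n−2)H₁(f) + Δf·|Df|²(1+|Df|²) + f·H₁(f)·Δf − H₁(f)·|Df|² − f·H₂(f)). -/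
theorem aux_contract {n : ℕ} (G B : Fin n → Fin n → ℝ) (x : Fin n → ℝ) :
    ∑ i, ∑ k, (∑ j, ∑ l, G j l * (B i k * B j l - B i l * B j k)) * x i * x k =
      (∑ i, ∑ k, B i k * x i * x k) * (∑ j, ∑ l, G j l * B j l) -
        ∑ j, ∑ l, G j l * ((∑ i, B i l * x i) * (∑ k, B j k * x k)) := by
  have h1 : ∀ i k, (∑ j, ∑ l, G j l * (B i k * B j l - B i l * B j k)) * x i * x k =
      B i k * x i * x k * (∑ j, ∑ l, G j l * B j l) -
        ∑ j, ∑ l, G j l * (B i l * x i * (B j k * x k)) := by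
    intro i k
    simp only [Finset.mul_sum, Finset.sum_mul, ← Finset.sum_sub_distrib]
    refine Finset.sum_congr rfl fun j _ => Finset.sum_congr rfl fun l _ => ?_
    ring
  simp only [h1, Finset.sum_sub_distrib]
  congr 1
  · simp only [← Finset.sum_mul]
  · have h2 : ∀ j l, G j l * ((∑ i, B i l * x i) * (∑ k, B j k * x k)) =
        ∑ i, ∑ k, G j l * (B i l * x i * (B j k * x k)) := by
      intro j l
      rw [Finset.sum_mul_sum]
      simp only [Finset.mul_sum]
    simp only [h2]
    calc _ = ∑ i, ∑ j, ∑ k, ∑ l, G j l * (B i l * x i * (B j k * x k)) :=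
          Finset.sum_congr rfl fun i _ => Finset.sum_comm
      _ = ∑ j, ∑ i, ∑ k, ∑ l, G j l * (B i l * x i * (B j k * x k)) := Finset.sum_comm
      _ = ∑ j, ∑ i, ∑ l, ∑ k, G j l * (B i l * x i * (B j k * x k)) :=
          Finset.sum_congr rfl fun j _ => Finset.sum_congr rfl fun i _ => Finset.sum_comm
      _ = _ := Finset.sum_congr rfl fun j _ => Finset.sum_comm

theorem aux_delta {n : ℕ} (M : Fin n → Fin n → ℝ) (v : Fin n → ℝ) (W : ℝ) :
    ∑ j, ∑ l, ((if j = l then (1:ℝ) else 0) - v j * v l / W) * M j l =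
      ∑ j, M j j - (∑ j, ∑ l, M j l * v j * v l) / W := by
  simp only [sub_mul, Finset.sum_sub_distrib, ite_mul, one_mul, zero_mul,
    Finset.sum_ite_eq, Finset.mem_univ, if_true, Finset.sum_div]
  congr 1
  refine Finset.sum_congr rfl fun j _ => Finset.sum_congr rfl fun l _ => ?_
  ring

/-- Identity (3.6): the Ricci curvature of a vertical graph in hyperbolic space, in the
direction of the normalized gradient of the height function `f`, expressed in terms of
`|Df|² = ∑ fᵢ²`, `Δf = ∑ fᵢᵢ`, `H₁(f) = ∑ fᵢⱼfᵢfⱼ` and `H₂(f) = ∑ fᵢₖfₖⱼfᵢfⱼ`. -/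
theorem ricci_normalized_gradient_identity (n : ℕ) (hn : 2 ≤ n)
    (f : ℝ) (hf : 0 < f) (v : Fin n → ℝ) (hv : v ≠ 0)
    (fd : Fin n → Fin n → ℝ) (hfd : ∀ i j, fd i j = fd j i)
    (Df2 Δf H1 H2 : ℝ)
    (hDf2 : Df2 = ∑ i, (v i) ^ 2)
    (hΔf : Δf = ∑ i, fd i i)
    (hH1 : H1 = ∑ i, ∑ j, fd i j * v i * v j)
    (hH2 : H2 = ∑ i, ∑ j, ∑ k, fd i k * fd k j * v i * v j)
    (g gInv II R : Fin n → Fin n → ℝ) (fbar : Fin n → ℝ)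
    (hg : ∀ i k, g i k = (1 / f ^ 2) * ((if i = k then (1:ℝ) else 0) + v i * v k))
    (hgInv : ∀ j l, gInv j l =
      f ^ 2 * ((if j = l then (1:ℝ) else 0) - v j * v l / (1 + Df2)))
    (hII : ∀ i j, II i j =
      ((if i = j then (1:ℝ) else 0) + v i * v j + f * fd i j) / (f ^ 2 * Real.sqrt (1 + Df2)))
    (hR : ∀ i k, R i k = -(n - 1 : ℝ) * g i k +
      ∑ j, ∑ l, gInv j l * (II i k * II j l - II i l * II j k))
    (hfbar : ∀ i, fbar i = f * v i / (Real.sqrt Df2 * Real.sqrt (1 + Df2))) :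
    ∑ i, ∑ k, R i k * fbar i * fbar k =
      -(n - 1 : ℝ) * Df2 / (1 + Df2) +
        (f / (Df2 * (1 + Df2) ^ 2)) *
          ((n - 2 : ℝ) * H1 + Δf * Df2 * (1 + Df2) + f * H1 * Δf - H1 * Df2 - f * H2) := by
  have hp : 0 < Df2 := by
    rw [hDf2]
    obtain ⟨i, hi⟩ := Function.ne_iff.mp hv
    exact Finset.sum_pos' (fun i _ => sq_nonneg _) ⟨i, Finset.mem_univ _, by
      have : v i ≠ 0 := hi
      positivity⟩
  have hW : 0 < 1 + Df2 := by linarith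
  obtain ⟨w, hw⟩ : ∃ w : Fin n → ℝ, ∀ i, w i = ∑ j, fd i j * v j := ⟨_, fun _ => rfl⟩
  have hvw : ∑ i, v i * w i = H1 := by
    rw [hH1]
    refine Finset.sum_congr rfl fun i _ => ?_
    rw [hw, Finset.mul_sum]
    exact Finset.sum_congr rfl fun j _ => by ring
  have hww : ∑ i, w i * w i = H2 := by
    rw [hH2]
    have : ∀ k, w k * w k = ∑ i, ∑ j, fd i k * fd k j * v i * v j := by
      intro k
      rw [hw, Finset.sum_mul_sum]
      refine Finset.sum_congr rfl fun i _ => Finset.sum_congr rfl fun j _ => ?_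
      rw [hfd k i]; ring
    simp only [this]
    rw [Finset.sum_comm]
    exact Finset.sum_congr rfl fun i _ => Finset.sum_comm
  have hvv : ∑ i, v i * v i = Df2 := by
    rw [hDf2]; exact Finset.sum_congr rfl fun i _ => by ring
  obtain ⟨A, hA⟩ : ∃ A : Fin n → Fin n → ℝ, ∀ i j, A i j =
      (if i = j then (1:ℝ) else 0) + v i * v j + f * fd i j := ⟨_, fun _ _ => rfl⟩
  have hAs : ∀ i j, A i j = A j i := by
    intro i j
    rw [hA, hA, hfd i j, mul_comm (v i)]
    simp only [eq_comm]
  have hAv : ∀ j, ∑ k, A j k * v k = (1 + Df2) * v j + f * w j := by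
    intro j
    have : ∀ k, A j k * v k = (if j = k then v k else 0) + v j * (v k * v k)
        + f * (fd j k * v k) := by
      intro k; rw [hA]; split_ifs <;> ring
    simp only [this, Finset.sum_add_distrib, ← Finset.mul_sum, hvv, ← hw,
      Finset.sum_ite_eq, Finset.mem_univ, if_true]
    ring
  have hAv' : ∀ l, ∑ i, A i l * v i = (1 + Df2) * v l + f * w l := by
    intro l; rw [← hAv]; exact Finset.sum_congr rfl fun i _ => by rw [hAs]
  have ha : ∑ i, ∑ k, A i k * v i * v k = (1 + Df2) * Df2 + f * H1 := by
    have : ∀ i, ∑ k, A i k * v i * v k = (1 + Df2) * (v i * v i) + f * (v i * w i) := by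
      intro i
      calc _ = v i * ∑ k, A i k * v k := by
            rw [Finset.mul_sum]; exact Finset.sum_congr rfl fun k _ => by ring
        _ = _ := by rw [hAv]; ring
    simp only [this, Finset.sum_add_distrib, ← Finset.mul_sum, hvv, hvw]
  have htr : ∑ i, A i i = n + Df2 + f * Δf := by
    simp only [hA, if_true, Finset.sum_add_distrib, ← Finset.mul_sum, hvv, ← hΔf]
    simp
  have hu1 : ∑ j, ((1 + Df2) * v j + f * w j) * ((1 + Df2) * v j + f * w j) =
      (1 + Df2) ^ 2 * Df2 + 2 * (1 + Df2) * f * H1 + f ^ 2 * H2 := by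
    have h : ∀ j, ((1 + Df2) * v j + f * w j) * ((1 + Df2) * v j + f * w j)
        = (1 + Df2) ^ 2 * (v j * v j) + 2 * (1 + Df2) * f * (v j * w j)
          + f ^ 2 * (w j * w j) := fun j => by ring
    simp only [h, Finset.sum_add_distrib, ← Finset.mul_sum, hvv, hvw, hww]
  have hu2 : ∑ j, ∑ l, (((1 + Df2) * v l + f * w l) * ((1 + Df2) * v j + f * w j)) * v j * v l =
      ((1 + Df2) * Df2 + f * H1) ^ 2 := by
    have : ∑ j, ((1 + Df2) * v j + f * w j) * v j = (1 + Df2) * Df2 + f * H1 := by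
      have h : ∀ j, ((1 + Df2) * v j + f * w j) * v j
          = (1 + Df2) * (v j * v j) + f * (v j * w j) := fun j => by ring
      simp only [h, Finset.sum_add_distrib, ← Finset.mul_sum, hvv, hvw]
    rw [sq, ← this, Finset.sum_mul_sum]
    exact Finset.sum_congr rfl fun j _ => Finset.sum_congr rfl fun l _ => by ring
  have key := aux_contract
    (fun j l => (if j = l then (1:ℝ) else 0) - v j * v l / (1 + Df2)) A v
  simp only [hAv, hAv', aux_delta, ha, htr, hu1, hu2] at key
  have hs1 : Real.sqrt Df2 ^ 2 = Df2 := Real.sq_sqrt hp.le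
  have hs2 : Real.sqrt (1 + Df2) ^ 2 = 1 + Df2 := Real.sq_sqrt hW.le
  have hg1 : ∑ i, ∑ k, ((if i = k then (1:ℝ) else 0) + v i * v k) * v i * v k =
      Df2 + Df2 ^ 2 := by
    simp only [add_mul, Finset.sum_add_distrib, ite_mul, one_mul, zero_mul,
      Finset.sum_ite_eq, Finset.mem_univ, if_true, hvv]
    congr 1
    rw [sq, ← hvv, Finset.sum_mul_sum]
    exact Finset.sum_congr rfl fun j _ => Finset.sum_congr rfl fun l _ => by ring
  have hRk : ∀ i k, R i k * fbar i * fbar k =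
      (-(n - 1 : ℝ) / (Df2 * (1 + Df2))) *
        (((if i = k then (1:ℝ) else 0) + v i * v k) * v i * v k) +
      (1 / (Df2 * (1 + Df2) ^ 2)) * ((∑ j, ∑ l,
        ((if j = l then (1:ℝ) else 0) - v j * v l / (1 + Df2)) *
          (A i k * A j l - A i l * A j k)) * v i * v k) := by
    intro i k
    have hsum : ∑ j, ∑ l, gInv j l * (II i k * II j l - II i l * II j k) =
        (1 / (f ^ 2 * (1 + Df2))) * ∑ j, ∑ l,
        ((if j = l then (1:ℝ) else 0) - v j * v l / (1 + Df2)) *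
          (A i k * A j l - A i l * A j k) := by
      simp only [Finset.mul_sum]
      refine Finset.sum_congr rfl fun j _ => Finset.sum_congr rfl fun l _ => ?_
      simp only [hgInv, hII, ← hA]
      generalize (if j = l then (1:ℝ) else 0) - v j * v l / (1 + Df2) = d
      have : Real.sqrt (1 + Df2) ≠ 0 := (Real.sqrt_pos.mpr hW).ne'
      generalize Real.sqrt (1 + Df2) = s at this hs2
      rw [← hs2]
      field_simp
    have hff : fbar i * fbar k = f ^ 2 * v i * v k / (Df2 * (1 + Df2)) := by
      rw [hfbar, hfbar, div_mul_div_comm]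
      congr 1
      · ring
      · calc _ = Real.sqrt Df2 ^ 2 * Real.sqrt (1 + Df2) ^ 2 := by ring
          _ = _ := by rw [hs1, hs2]
    rw [mul_assoc, hff, hR, hsum, hg]
    generalize (∑ j, ∑ l, ((if j = l then (1:ℝ) else 0) - v j * v l / (1 + Df2)) *
          (A i k * A j l - A i l * A j k)) = S
    generalize (if i = k then (1:ℝ) else 0) = d
    field_simp
  simp only [hRk, Finset.sum_add_distrib, ← Finset.mul_sum]
  rw [hg1]
  simp only [aux_delta]
  rw [key]
  field_simp
  ring
end

section
/- Let n ≥ 2 be a natural number, f > 0 and f₁ real numbers, and A, B real numbers. Set X = (1+f₁²)/f + A and Y = B + (n−1)/f, and let a = f·(1+f₁²)^{−3/2}·X and b = f·(1+f₁²)^{−1/2}·Y. If a·b ≥ n−1 and a + b ≥ n, then a > 0, b > 0, and √((n−1)·X)·√Y ≥ (n−1)·(1+f₁²)/f. -/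
/-- Inequality (3.9): with `X = (1+f₁²)/f + A`, `Y = B + (n-1)/f`,
`a = f(1+f₁²)^{-3/2}X` and `b = f(1+f₁²)^{-1/2}Y`, if `ab ≥ n-1` (nonnegative Ricci,
i.e. (3.8)) and `a+b ≥ n` (mean curvature at least `n`), then both factors are positive
and `√((n-1)X)·√Y ≥ (n-1)(1+f₁²)/f`. -/
theorem key_inequality (n : ℕ) (hn : 2 ≤ n) (f f₁ A B : ℝ) (hf : 0 < f)
    (X Y a b : ℝ)
    (hX : X = (1 + f₁ ^ 2) / f + A)
    (hY : Y = B + (n - 1 : ℝ) / f)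
    (ha : a = f * (1 + f₁ ^ 2) ^ (-(3 : ℝ) / 2) * X)
    (hb : b = f * (1 + f₁ ^ 2) ^ (-(1 : ℝ) / 2) * Y)
    (hab : a * b ≥ (n - 1 : ℝ)) (hsum : a + b ≥ n) :
    0 < a ∧ 0 < b ∧
      Real.sqrt ((n - 1 : ℝ) * X) * Real.sqrt Y ≥ (n - 1 : ℝ) * (1 + f₁ ^ 2) / f := by
  have hn' : (2 : ℝ) ≤ n := by exact_mod_cast hn
  have hW : 0 < 1 + f₁ ^ 2 := by positivity
  have hprod : 0 < a * b := by linarith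
  have ha0 : 0 < a := by
    by_contra h
    have h1 : a ≤ 0 := not_lt.mp h
    have h2 : 0 < b := by linarith
    nlinarith
  have hb0 : 0 < b := (mul_pos_iff_of_pos_left ha0).mp hprod
  refine ⟨ha0, hb0, ?_⟩
  clear hX hY
  generalize 1 + f₁ ^ 2 = W at *
  have hX0 : 0 < X := by
    rw [ha] at ha0
    exact (mul_pos_iff_of_pos_left (by positivity)).mp ha0
  have hpow : W ^ (-(3 : ℝ) / 2) * W ^ (-(1 : ℝ) / 2) = (W ^ 2)⁻¹ := by
    rw [← Real.rpow_add hW, show (-(3 : ℝ) / 2 + -(1 : ℝ) / 2) = -(2 : ℕ) by norm_num,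
      Real.rpow_neg hW.le, Real.rpow_natCast]
  have hab2 : a * b = f ^ 2 * (W ^ 2)⁻¹ * (X * Y) := by
    rw [← hpow, ha, hb]; ring
  have hXY : (n - 1 : ℝ) * (W / f) ^ 2 ≤ X * Y := by
    have h3 : X * Y = a * b * (W / f) ^ 2 := by
      rw [hab2]; field_simp
    rw [h3]
    exact mul_le_mul_of_nonneg_right hab (by positivity)
  have hn1 : (0 : ℝ) ≤ n - 1 := by linarith
  rw [← Real.sqrt_mul (mul_nonneg hn1 hX0.le)]
  apply Real.le_sqrt_of_sq_le
  calc ((n - 1 : ℝ) * W / f) ^ 2 = (n - 1 : ℝ) * ((n - 1 : ℝ) * (W / f) ^ 2) := by ring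
    _ ≤ (n - 1 : ℝ) * (X * Y) := mul_le_mul_of_nonneg_left hXY hn1
    _ = _ := by ring
end

section
/- Let n ≥ 2 be a natural number, f > 0 and f₁ real numbers, and A, B real numbers. Suppose X = (1+f₁²)/f + A > 0, Y = B + (n−1)/f > 0, and X·Y ≥ (n−1)·(1+f₁²)²/f². Then (n−1)·(A/f − f₁²/f²) + B/f ≥ 0. -/
/-- The Young's-inequality step in Theorem 3.3: if `X = (1+f₁²)/f + A > 0`,
`Y = B + (n-1)/f > 0` and `XY ≥ (n-1)(1+f₁²)²/f²`, then
`(n-1)(A/f - f₁²/f²) + B/f ≥ 0`, i.e. `log f` is pointwise `n`-subharmonic in adapted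
coordinates. -/
theorem young_step_n_subharmonic (n : ℕ) (hn : 2 ≤ n) (f f₁ A B : ℝ) (hf : 0 < f)
    (X Y : ℝ)
    (hX : X = (1 + f₁ ^ 2) / f + A) (hXpos : 0 < X)
    (hY : Y = B + (n - 1 : ℝ) / f) (hYpos : 0 < Y)
    (hXY : X * Y ≥ (n - 1 : ℝ) * (1 + f₁ ^ 2) ^ 2 / f ^ 2) :
    (n - 1 : ℝ) * (A / f - f₁ ^ 2 / f ^ 2) + B / f ≥ 0 := by
  have hm : (0:ℝ) < (n:ℝ) - 1 := by
    have : (2:ℝ) ≤ n := by exact_mod_cast hn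
    linarith
  generalize (n:ℝ) - 1 = m at *
  have hw : m * (1 + f₁ ^ 2) ^ 2 / f ^ 2 = m * ((1 + f₁ ^ 2) / f) ^ 2 := by
    rw [div_pow, mul_div_assoc]
  rw [hw] at hXY
  have key : 2 * m * ((1 + f₁ ^ 2) / f) ≤ m * X + Y := by
    refine abs_le_of_sq_le_sq' ?_ (by positivity) |>.2
    have h := mul_le_mul_of_nonneg_left hXY (by positivity : (0:ℝ) ≤ 4 * m)
    nlinarith [sq_nonneg (m * X - Y)]
  have e : m * (A / f - f₁ ^ 2 / f ^ 2) + B / f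
      = (m * X + Y - 2 * m * ((1 + f₁ ^ 2) / f)) / f := by
    rw [hX, hY]
    field_simp
    ring
  rw [e]
  exact div_nonneg (by linarith) hf.le
end

section
/- Let n ≥ 2 be a natural number, U an open subset of Euclidean space ℝⁿ, and f : U → ℝ a positive C² function. At each point x ∈ U with ∇f(x) ≠ 0 write H₁ = ⟨(Hess f)(x)(∇f(x)), ∇f(x)⟩, H₂ = ‖(Hess f)(x)(∇f(x))‖², Δf = trace of (Hess f)(x), and |Df|² = ‖∇f(x)‖². Suppose that at every such x: (i) −(n−1)|Df|²/(1+|Df|²) + (f/(|Df|²(1+|Df|²)²))·((n−2)H₁ + Δf·|Df|²(1+|Df|²) + f·H₁·Δf − H₁·|Df|² − f·H₂) ≥ 0, and (ii) (1+|Df|²)^{−1/2}·(n + f·Δf − f·H₁/(1+|Df|²)) ≥ n. Then at every x ∈ U with ∇f(x) ≠ 0, the function h = log f satisfies Δh(x) + (n−2)·⟨(Hess h)(x)(∇h(x)), ∇h(x)⟩/‖∇h(x)‖² ≥ 0; that is, log f is pointwise n-subharmonic wherever its gradient does not vanish. -/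
open scoped RealInnerProductSpace

theorem aux_alg (m p F T H1 H2 : ℝ) (hm : 1 ≤ m) (hp : 0 < p) (hF : 0 < F)
    (hcs : H1 ^ 2 ≤ H2 * p)
    (h1 : -m * p / (1 + p) + (F / (p * (1 + p) ^ 2)) *
      ((m - 1) * H1 + T * p * (1 + p) + F * H1 * T - H1 * p - F * H2) ≥ 0)
    (h2 : (1 / Real.sqrt (1 + p)) * ((m + 1) + F * T - F * H1 / (1 + p)) ≥ m + 1) :
    0 ≤ F * T + (m - 1) * (F * H1 / p) - m * p := by
  obtain ⟨a, rfl⟩ : ∃ a, H1 = a * p / F := ⟨F * H1 / p, by field_simp⟩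
  obtain ⟨c, rfl⟩ : ∃ c, T = (m * c + a) / F := ⟨(F * T - a) / m, by field_simp; ring⟩
  have hq : 0 < 1 + p := by linarith
  have hcs' : a ^ 2 * p ≤ F ^ 2 * H2 := by
    have : (a * p / F) ^ 2 = a ^ 2 * p ^ 2 / F ^ 2 := by ring
    rw [this, div_le_iff₀ (by positivity)] at hcs
    nlinarith
  have e1 : -m * p / (1 + p) + (F / (p * (1 + p) ^ 2)) *
      ((m - 1) * (a * p / F) + (m * c + a) / F * p * (1 + p) + F * (a * p / F) * ((m * c + a) / F)
        - (a * p / F) * p - F * H2)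
      = (m * ((a + 1 + p) * (c + 1) - (1 + p) ^ 2) * p + (a ^ 2 * p - F ^ 2 * H2))
        / (p * (1 + p) ^ 2) := by
    field_simp
    ring
  rw [e1] at h1
  have h1' : 0 ≤ m * ((a + 1 + p) * (c + 1) - (1 + p) ^ 2) * p + (a ^ 2 * p - F ^ 2 * H2) := by
    by_contra hc
    push Not at hc
    have := div_neg_of_neg_of_pos hc (show 0 < p * (1 + p) ^ 2 by positivity)
    linarith
  have h3 : (1 + p) ^ 2 ≤ (a + 1 + p) * (c + 1) := by
    by_contra hc
    push Not at hc
    have : m * ((1 + p) ^ 2 - (a + 1 + p) * (c + 1)) * p > 0 := by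
      have : 0 < (1 + p) ^ 2 - (a + 1 + p) * (c + 1) := by linarith
      positivity
    nlinarith
  have hX : 0 < m * (c + 1) + (a + 1 + p) / (1 + p) := by
    have e2 : (m + 1) + F * ((m * c + a) / F) - F * (a * p / F) / (1 + p)
       = m * (c + 1) + (a + 1 + p) / (1 + p) := by
      field_simp
      ring
    rw [e2] at h2
    by_contra hc
    have : (1 / Real.sqrt (1 + p)) * (m * (c + 1) + (a + 1 + p) / (1 + p)) ≤ 0 :=
      mul_nonpos_of_nonneg_of_nonpos (by positivity) (by linarith)
    linarith
  have hC : 0 < c + 1 := by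
    by_contra hc
    push Not at hc
    have hA : a + 1 + p ≤ 0 := by
      by_contra hA
      push Not at hA
      nlinarith
    have : (a + 1 + p) / (1 + p) ≤ 0 := div_nonpos_of_nonpos_of_nonneg hA hq.le
    nlinarith
  have hA : 0 < a + 1 + p := by
    by_contra hA
    nlinarith
  have h4 : p ≤ a + c := by
    nlinarith [sq_nonneg ((a + 1 + p) - (c + 1))]
  have e3 : F * ((m * c + a) / F) + (m - 1) * (F * (a * p / F) / p) - m * p
      = m * (a + c - p) := by
    field_simp
    ring
  rw [e3]
  exact mul_nonneg (by linarith) (by linarith)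

theorem aux_grad {n : ℕ} (U : Set (EuclideanSpace ℝ (Fin n))) (hU : IsOpen U)
    (f : EuclideanSpace ℝ (Fin n) → ℝ) (hfpos : ∀ x ∈ U, 0 < f x)
    (hf : ContDiffOn ℝ 2 f U) (x) (hx : x ∈ U) :
    gradient (fun y => Real.log (f y)) x = (f x)⁻¹ • gradient f x := by
  have hd : DifferentiableAt ℝ f x :=
    (hf.contDiffAt (hU.mem_nhds hx)).differentiableAt (by norm_num)
  unfold gradient
  rw [fderiv.log hd (hfpos x hx).ne', map_smul]

theorem aux_hess {n : ℕ} (U : Set (EuclideanSpace ℝ (Fin n))) (hU : IsOpen U)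
    (f : EuclideanSpace ℝ (Fin n) → ℝ) (hfpos : ∀ x ∈ U, 0 < f x)
    (hf : ContDiffOn ℝ 2 f U) (x) (hx : x ∈ U) :
    fderiv ℝ (gradient (fun y => Real.log (f y))) x =
      (f x)⁻¹ • fderiv ℝ (gradient f) x +
        (-((f x) ^ 2)⁻¹ • fderiv ℝ f x).smulRight (gradient f x) := by
  have hc := hf.contDiffAt (hU.mem_nhds hx)
  have hd : DifferentiableAt ℝ f x := hc.differentiableAt (by norm_num)
  have hg : DifferentiableAt ℝ (gradient f) x := by
    have h1 : DifferentiableAt ℝ (fderiv ℝ f) x :=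
      (hc.fderiv_right (m := 1) (by norm_num)).differentiableAt (by norm_num)
    exact ((InnerProductSpace.toDual ℝ
      (EuclideanSpace ℝ (Fin n))).symm.toContinuousLinearEquiv.differentiableAt).comp x h1
  have he : gradient (fun y => Real.log (f y)) =ᶠ[nhds x] fun y => (f y)⁻¹ • gradient f y := by
    filter_upwards [hU.mem_nhds hx] with y hy
    exact aux_grad U hU f hfpos hf y hy
  rw [he.fderiv_eq]
  have hi : HasFDerivAt (fun y => (f y)⁻¹) (-((f x) ^ 2)⁻¹ • fderiv ℝ f x) x :=
    (hasDerivAt_inv (hfpos x hx).ne').comp_hasFDerivAt x hd.hasFDerivAt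
  exact (hi.smul hg.hasFDerivAt).fderiv

/-- Theorem 3.3: if the vertical graph of a positive `C²` function `f` has nonnegative
Ricci curvature in the direction of the normalized gradient (hypothesis (i), identity
(3.6) ≥ 0) and mean curvature at least `n` (hypothesis (ii)), then the height function
`h = log f` is pointwise Euclidean `n`-subharmonic wherever `∇f ≠ 0`:
`Δh + (n-2)|∇h|⁻² ⟨Hess h(∇h), ∇h⟩ ≥ 0`. -/
theorem graph_nonneg_ricci_height_n_subharmonic (n : ℕ) (hn : 2 ≤ n)
    (U : Set (EuclideanSpace ℝ (Fin n))) (hU : IsOpen U)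
    (f : EuclideanSpace ℝ (Fin n) → ℝ) (hfpos : ∀ x ∈ U, 0 < f x)
    (hf : ContDiffOn ℝ 2 f U)
    (hRic : ∀ x ∈ U, gradient f x ≠ 0 →
      -(n - 1 : ℝ) * ‖gradient f x‖ ^ 2 / (1 + ‖gradient f x‖ ^ 2) +
        (f x / (‖gradient f x‖ ^ 2 * (1 + ‖gradient f x‖ ^ 2) ^ 2)) *
          ((n - 2 : ℝ) * ⟪fderiv ℝ (gradient f) x (gradient f x), gradient f x⟫ +
            (LinearMap.trace ℝ (EuclideanSpace ℝ (Fin n))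
                (fderiv ℝ (gradient f) x :
                  EuclideanSpace ℝ (Fin n) →ₗ[ℝ] EuclideanSpace ℝ (Fin n))) *
              ‖gradient f x‖ ^ 2 * (1 + ‖gradient f x‖ ^ 2) +
            f x * ⟪fderiv ℝ (gradient f) x (gradient f x), gradient f x⟫ *
              (LinearMap.trace ℝ (EuclideanSpace ℝ (Fin n))
                (fderiv ℝ (gradient f) x :
                  EuclideanSpace ℝ (Fin n) →ₗ[ℝ] EuclideanSpace ℝ (Fin n))) -
            ⟪fderiv ℝ (gradient f) x (gradient f x), gradient f x⟫ * ‖gradient f x‖ ^ 2 -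
            f x * ‖fderiv ℝ (gradient f) x (gradient f x)‖ ^ 2) ≥ 0)
    (hMean : ∀ x ∈ U, gradient f x ≠ 0 →
      (1 / Real.sqrt (1 + ‖gradient f x‖ ^ 2)) *
        (n + f x * (LinearMap.trace ℝ (EuclideanSpace ℝ (Fin n))
              (fderiv ℝ (gradient f) x :
                EuclideanSpace ℝ (Fin n) →ₗ[ℝ] EuclideanSpace ℝ (Fin n))) -
          f x * ⟪fderiv ℝ (gradient f) x (gradient f x), gradient f x⟫ /
            (1 + ‖gradient f x‖ ^ 2)) ≥ n) :
    ∀ x ∈ U, gradient f x ≠ 0 →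
      (LinearMap.trace ℝ (EuclideanSpace ℝ (Fin n))
          (fderiv ℝ (gradient (fun y => Real.log (f y))) x :
            EuclideanSpace ℝ (Fin n) →ₗ[ℝ] EuclideanSpace ℝ (Fin n))) +
        (n - 2 : ℝ) *
          ⟪fderiv ℝ (gradient (fun y => Real.log (f y))) x
              (gradient (fun y => Real.log (f y)) x),
            gradient (fun y => Real.log (f y)) x⟫ /
          ‖gradient (fun y => Real.log (f y)) x‖ ^ 2 ≥ 0 := by
  intro x hx hgx
  have hF := hfpos x hx
  have h1 := hRic x hx hgx
  have h2 := hMean x hx hgx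
  rw [aux_hess U hU f hfpos hf x hx, aux_grad U hU f hfpos hf x hx]
  have hdf : ∀ v, fderiv ℝ f x v = ⟪gradient f x, v⟫ := by
    intro v
    simp [gradient]
  have htr : LinearMap.trace ℝ (EuclideanSpace ℝ (Fin n))
      (((f x)⁻¹ • fderiv ℝ (gradient f) x +
        (-((f x) ^ 2)⁻¹ • fderiv ℝ f x).smulRight (gradient f x) :
        EuclideanSpace ℝ (Fin n) →L[ℝ] EuclideanSpace ℝ (Fin n)) :
        EuclideanSpace ℝ (Fin n) →ₗ[ℝ] EuclideanSpace ℝ (Fin n)) =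
      (f x)⁻¹ * LinearMap.trace ℝ (EuclideanSpace ℝ (Fin n))
        (fderiv ℝ (gradient f) x :
          EuclideanSpace ℝ (Fin n) →ₗ[ℝ] EuclideanSpace ℝ (Fin n))
        - ((f x) ^ 2)⁻¹ * ‖gradient f x‖ ^ 2 := by
    have h3 := LinearMap.trace_smulRight (R := ℝ) (M := EuclideanSpace ℝ (Fin n))
      ((-((f x) ^ 2)⁻¹ • fderiv ℝ f x : EuclideanSpace ℝ (Fin n) →L[ℝ] ℝ) :
        EuclideanSpace ℝ (Fin n) →ₗ[ℝ] ℝ) (gradient f x)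
    rw [ContinuousLinearMap.toLinearMap_add, map_add, ContinuousLinearMap.toLinearMap_smul, map_smul, smul_eq_mul, sub_eq_add_neg]
    congr 1
    refine h3.trans ?_
    simp [hdf, real_inner_self_eq_norm_sq]
  rw [htr]
  have hp : 0 < ‖gradient f x‖ ^ 2 := by
    have := norm_pos_iff.mpr hgx
    positivity
  have hcs : ⟪fderiv ℝ (gradient f) x (gradient f x), gradient f x⟫ ^ 2 ≤
      ‖fderiv ℝ (gradient f) x (gradient f x)‖ ^ 2 * ‖gradient f x‖ ^ 2 := by
    rw [← mul_pow, ← sq_abs]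
    exact pow_le_pow_left₀ (abs_nonneg _) (abs_real_inner_le_norm _ _) 2
  have hin : ⟪((f x)⁻¹ • fderiv ℝ (gradient f) x +
        (-((f x) ^ 2)⁻¹ • fderiv ℝ f x).smulRight (gradient f x)) ((f x)⁻¹ • gradient f x),
        (f x)⁻¹ • gradient f x⟫ =
      (f x)⁻¹ ^ 3 * ⟪fderiv ℝ (gradient f) x (gradient f x), gradient f x⟫
        - (f x)⁻¹ ^ 4 * (‖gradient f x‖ ^ 2) ^ 2 := by
    simp only [ContinuousLinearMap.add_apply, ContinuousLinearMap.smul_apply,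
      ContinuousLinearMap.smulRight_apply, map_smul, hdf, inner_add_left, real_inner_smul_left,
      real_inner_smul_right, real_inner_self_eq_norm_sq, smul_eq_mul]
    field_simp
    ring
  have hno : ‖(f x)⁻¹ • gradient f x‖ ^ 2 = (f x)⁻¹ ^ 2 * ‖gradient f x‖ ^ 2 := by
    rw [norm_smul, mul_pow, Real.norm_eq_abs, sq_abs]
  rw [hin, hno]
  have hm : (1 : ℝ) ≤ n - 1 := by
    have : (2 : ℝ) ≤ n := by exact_mod_cast hn
    linarith
  generalize ‖gradient f x‖ ^ 2 = p at *
  generalize ⟪fderiv ℝ (gradient f) x (gradient f x), gradient f x⟫ = H1 at *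
  generalize ‖fderiv ℝ (gradient f) x (gradient f x)‖ ^ 2 = H2 at *
  generalize LinearMap.trace ℝ (EuclideanSpace ℝ (Fin n))
        (fderiv ℝ (gradient f) x :
          EuclideanSpace ℝ (Fin n) →ₗ[ℝ] EuclideanSpace ℝ (Fin n)) = T at *
  generalize f x = F at *
  have key := aux_alg (n - 1) p F T H1 H2 hm hp hF hcs
    (by rw [show (n - 1 - 1 : ℝ) = n - 2 by ring]; exact h1)
    (by rw [show (n - 1 + 1 : ℝ) = n by ring]; exact h2)
  have e : F⁻¹ * T - (F ^ 2)⁻¹ * p + (n - 2 : ℝ) * (F⁻¹ ^ 3 * H1 - F⁻¹ ^ 4 * p ^ 2) / (F⁻¹ ^ 2 * p)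
      = (F * T + ((n - 1 : ℝ) - 1) * (F * H1 / p) - (n - 1) * p) / F ^ 2 := by
    field_simp
    ring
  rw [e]
  exact div_nonneg key (by positivity)
end
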